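/- (Nash welfare case, p = 0.) Suppose the feasible allocation x satisfies the Nashian Greedy condition and the valuations have unit monopolist utilities. Let x* be any feasible allocation with U*_a = ∫_0^T v a s · x*_a s ds. Then the geometric means satisfy (∏_a U*_a)^{1/n} ≤ log(n+1) · (∏_a U a T)^{1/n}. -/

import Mathlib

open MeasureTheory Real

/-!
The greedy rule only serves agents that maximise `v a s / U a s`, so at almost every time `s` the
allocation `x` maximises `∑ a, v a s * y a s / U a s` over all feasible `y`. As each `U a` is
nondecreasing, every feasible `y` satisfies
`∑ a, v a s * y a s / U a T ≤ ∑ a, v a s * x a s / U a s`. The right-hand side is the derivative of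
`∑ a, log (U a s)`, so integrating bounds the sum of the ratios of final utilities by
`∑ a, log (U a T / U a 0)`, where `U a T - U a 0` is at most the monopolist utility of `a`. AM-GM
turns this into a bound on the ratio of the geometric means.
-/

section Primitive

variable {f : ℝ → ℝ} {a b c : ℝ}

lemma monotoneOn_const_add_intervalIntegral (hf : IntervalIntegrable f volume a b)
    (hf_nonneg : ∀ᵐ s ∂volume.restrict (Set.Icc a b), 0 ≤ f s) :
    MonotoneOn (fun t => c + ∫ s in a..t, f s) (Set.Icc a b) := by
  intro s hs t ht hst
  have hsub : Set.Ioc a t ⊆ Set.Icc a b :=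
    Set.Ioc_subset_Icc_self.trans (Set.Icc_subset_Icc_right ht.2)
  have hint : IntervalIntegrable f volume a t :=
    hf.mono_set (Set.uIcc_subset_uIcc_left (Set.Icc_subset_uIcc ht))
  exact add_le_add_right (intervalIntegral.integral_mono_interval le_rfl hs.1 hst
    (ae_restrict_of_ae_restrict_of_subset hsub hf_nonneg) hint) c

lemma le_const_add_intervalIntegral (hf : IntervalIntegrable f volume a b)
    (hf_nonneg : ∀ᵐ s ∂volume.restrict (Set.Icc a b), 0 ≤ f s) {t : ℝ} (ht : t ∈ Set.Icc a b) :
    c ≤ c + ∫ s in a..t, f s := by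
  simpa using monotoneOn_const_add_intervalIntegral (c := c) hf hf_nonneg
    (Set.left_mem_Icc.2 (ht.1.trans ht.2)) ht ht.1

lemma monotoneOn_log_const_add_intervalIntegral (hc : 0 < c)
    (hf : IntervalIntegrable f volume a b)
    (hf_nonneg : ∀ᵐ s ∂volume.restrict (Set.Icc a b), 0 ≤ f s) :
    MonotoneOn (fun t => log (c + ∫ s in a..t, f s)) (Set.Icc a b) := fun _ hs _ ht hst =>
  log_le_log (hc.trans_le (le_const_add_intervalIntegral hf hf_nonneg hs))
    (monotoneOn_const_add_intervalIntegral hf hf_nonneg hs ht hst)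

lemma ae_deriv_log_const_add_intervalIntegral (hab : a ≤ b) (hc : 0 < c)
    (hf : IntervalIntegrable f volume a b)
    (hf_nonneg : ∀ᵐ s ∂volume.restrict (Set.Icc a b), 0 ≤ f s) :
    ∀ᵐ s, s ∈ Set.uIoc a b →
      deriv (fun t => log (c + ∫ r in a..t, f r)) s = f s / (c + ∫ r in a..s, f r) := by
  filter_upwards [hf.ae_hasDerivAt_integral] with s hderiv hs
  have hs' : s ∈ Set.uIcc a b := Set.uIoc_subset_uIcc hs
  have hpos : 0 < c + ∫ r in a..s, f r :=
    hc.trans_le (le_const_add_intervalIntegral hf hf_nonneg (Set.uIcc_of_le hab ▸ hs'))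
  exact (((hderiv hs' a Set.left_mem_uIcc).const_add c).log hpos.ne').deriv

lemma intervalIntegrable_div_const_add_intervalIntegral (hab : a ≤ b) (hc : 0 < c)
    (hf : IntervalIntegrable f volume a b)
    (hf_nonneg : ∀ᵐ s ∂volume.restrict (Set.Icc a b), 0 ≤ f s) :
    IntervalIntegrable (fun s => f s / (c + ∫ r in a..s, f r)) volume a b := by
  have hmono := monotoneOn_log_const_add_intervalIntegral hc hf hf_nonneg
  rw [← Set.uIcc_of_le hab] at hmono
  exact hmono.intervalIntegrable_deriv.congr_ae ((ae_restrict_iff' measurableSet_uIoc).2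
    (ae_deriv_log_const_add_intervalIntegral hab hc hf hf_nonneg))

/- Equality holds, but the inequality needs only that a monotone function grows by at least the
integral of its derivative, rather than absolute continuity of the logarithm of the primitive. -/
lemma intervalIntegral_div_const_add_intervalIntegral_le (hab : a ≤ b) (hc : 0 < c)
    (hf : IntervalIntegrable f volume a b)
    (hf_nonneg : ∀ᵐ s ∂volume.restrict (Set.Icc a b), 0 ≤ f s) :
    ∫ s in a..b, f s / (c + ∫ r in a..s, f r) ≤ log (1 + (∫ s in a..b, f s) / c) := by
  have hmono := monotoneOn_log_const_add_intervalIntegral hc hf hf_nonneg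
  have hle := hmono (Set.left_mem_Icc.2 hab) (Set.right_mem_Icc.2 hab) hab
  rw [← Set.uIcc_of_le hab] at hmono
  have hmem := hmono.intervalIntegral_deriv_mem_uIcc
  rw [Set.uIcc_of_le (sub_nonneg.2 hle), intervalIntegral.integral_congr_ae
    (ae_deriv_log_const_add_intervalIntegral hab hc hf hf_nonneg)] at hmem
  have hend : c + ∫ s in a..b, f s ≠ 0 :=
    (hc.trans_le (le_const_add_intervalIntegral hf hf_nonneg (Set.right_mem_Icc.2 hab))).ne'
  calc ∫ s in a..b, f s / (c + ∫ r in a..s, f r)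
      ≤ log (c + ∫ s in a..b, f s) - log (c + ∫ s in a..a, f s) := hmem.2
    _ = log (1 + (∫ s in a..b, f s) / c) := by
        rw [intervalIntegral.integral_same, add_zero, ← log_div hend hc.ne', add_div,
          div_self hc.ne']

end Primitive

section FiniteSums

variable {ι : Type*} [Fintype ι]

lemma sum_mul_le_sum_mul_of_forall_pos_le {R : Type*} [CommSemiring R] [PartialOrder R]
    [IsOrderedRing R] {w p q : ι → R} (hw : ∀ i, 0 ≤ w i)
    (hp : ∀ i, 0 ≤ p i) (hp_sum : ∑ i, p i = 1) (hq : ∀ i, 0 ≤ q i) (hq_sum : ∑ i, q i ≤ 1)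
    (hmax : ∀ i j, 0 < p i → w j ≤ w i) : ∑ i, w i * q i ≤ ∑ i, w i * p i := by
  have weight_le : ∀ j, w j ≤ ∑ i, w i * p i := fun j =>
    calc w j = ∑ i, w j * p i := by rw [← Finset.mul_sum, hp_sum, mul_one]
      _ ≤ ∑ i, w i * p i := Finset.sum_le_sum fun i _ => by
        rcases (hp i).eq_or_lt with hzero | hpos
        · simp only [← hzero, mul_zero, le_refl]
        · exact mul_le_mul_of_nonneg_right (hmax i j hpos) hpos.le
  calc ∑ j, w j * q j ≤ ∑ j, (∑ i, w i * p i) * q j :=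
        Finset.sum_le_sum fun j _ => mul_le_mul_of_nonneg_right (weight_le j) (hq j)
    _ = (∑ i, w i * p i) * ∑ j, q j := by rw [Finset.mul_sum]
    _ ≤ ∑ i, w i * p i := mul_le_of_le_one_right
        (Finset.sum_nonneg fun i _ => mul_nonneg (hw i) (hp i)) hq_sum

lemma geom_mean_le_arith_mean_div_mul_geom_mean [Nonempty ι] {u w : ι → ℝ}
    (hu : ∀ i, 0 ≤ u i) (hw : ∀ i, 0 < w i) :
    (∏ i, u i) ^ (1 / (Fintype.card ι : ℝ)) ≤
      (∑ i, u i / w i) / Fintype.card ι * (∏ i, w i) ^ (1 / (Fintype.card ι : ℝ)) := by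
  have hw_prod : 0 < ∏ i, w i := Finset.prod_pos fun i _ => hw i
  have hamgm := geom_mean_le_arith_mean Finset.univ (fun _ => 1) (fun i => u i / w i)
    (fun _ _ => zero_le_one) (by simp [Fintype.card_pos]) (fun i _ => div_nonneg (hu i) (hw i).le)
  simp only [rpow_one, one_mul, Finset.sum_const, Finset.card_univ, nsmul_eq_mul, mul_one,
    Finset.prod_div_distrib, ← one_div] at hamgm
  rwa [div_rpow (Finset.prod_nonneg fun i _ => hu i) hw_prod.le,
    div_le_iff₀ (rpow_pos_of_pos hw_prod _)] at hamgm

end FiniteSums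

section Allocation

variable {ι : Type*} [Fintype ι] {T : ℝ} {c : ι → ℝ} {v x y : ι → ℝ → ℝ}

/-- A feasible allocation `x` of one divisible unit at each time in `[0, T]`: agent `a` receives the
share `x a s` of the unit arriving at time `s`, and part of it may be left unallocated. The
conditions on the shares hold only almost everywhere. -/
structure IsFeasibleAllocation (T : ℝ) (x : ι → ℝ → ℝ) : Prop where
  aestronglyMeasurable : ∀ a, AEStronglyMeasurable (x a) (volume.restrict (Set.Icc 0 T))
  ae_nonneg_and_sum_le_one :
    ∀ᵐ s ∂volume.restrict (Set.Icc 0 T), (∀ a, 0 ≤ x a s) ∧ ∑ a, x a s ≤ 1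

/-- The utility of agent `a` at time `t` under the allocation `x` and valuations `v`, counted from
the base utility `c a`. The paper's base-`1/n` utility is the case `c = fun _ => 1 / n`. -/
noncomputable def baseUtility (c : ι → ℝ) (v x : ι → ℝ → ℝ) (a : ι) (t : ℝ) : ℝ :=
  c a + ∫ s in (0 : ℝ)..t, v a s * x a s

/-- The Nashian Greedy condition: almost every unit is fully allocated, and only to agents `a`
maximising `v a s / baseUtility c v x a s`. The comparison of ratios is cross-multiplied. -/
def IsNashianGreedy (T : ℝ) (c : ι → ℝ) (v x : ι → ℝ → ℝ) : Prop :=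
  ∀ᵐ s ∂volume.restrict (Set.Icc 0 T), ∑ a, x a s = 1 ∧
    ∀ a b, 0 < x a s → v b s * baseUtility c v x a s ≤ v a s * baseUtility c v x b s

namespace IsFeasibleAllocation

lemma ae_mem_Icc (hx : IsFeasibleAllocation T x) (a : ι) :
    ∀ᵐ s ∂volume.restrict (Set.Icc 0 T), x a s ∈ Set.Icc 0 1 := by
  filter_upwards [hx.ae_nonneg_and_sum_le_one] with s ⟨hnonneg, hsum⟩
  exact ⟨hnonneg a, (Finset.single_le_sum (fun b _ => hnonneg b) (Finset.mem_univ a)).trans hsum⟩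

lemma ae_mul_nonneg (hx : IsFeasibleAllocation T x) {f : ℝ → ℝ}
    (hf_nonneg : ∀ᵐ s ∂volume.restrict (Set.Icc 0 T), 0 ≤ f s) (a : ι) :
    ∀ᵐ s ∂volume.restrict (Set.Icc 0 T), 0 ≤ f s * x a s := by
  filter_upwards [hf_nonneg, hx.ae_mem_Icc a] with s hfs hxs using mul_nonneg hfs hxs.1

lemma intervalIntegrable_mul (hx : IsFeasibleAllocation T x) (hT : 0 ≤ T) {f : ℝ → ℝ}
    (hf : IntervalIntegrable f volume 0 T) (a : ι) :
    IntervalIntegrable (fun s => f s * x a s) volume 0 T := by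
  rw [intervalIntegrable_iff_integrableOn_Icc_of_le hT] at hf ⊢
  refine hf.mul_bdd (c := 1) (hx.aestronglyMeasurable a) ?_
  filter_upwards [hx.ae_mem_Icc a] with s hs
  exact (norm_of_nonneg hs.1).trans_le hs.2

lemma integral_mul_nonneg (hx : IsFeasibleAllocation T x) (hT : 0 ≤ T) {f : ℝ → ℝ}
    (hf_nonneg : ∀ᵐ s ∂volume.restrict (Set.Icc 0 T), 0 ≤ f s) (a : ι) :
    0 ≤ ∫ s in (0 : ℝ)..T, f s * x a s :=
  intervalIntegral.integral_nonneg_of_ae_restrict hT (hx.ae_mul_nonneg hf_nonneg a)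

lemma integral_mul_le (hx : IsFeasibleAllocation T x) (hT : 0 ≤ T) {f : ℝ → ℝ}
    (hf : IntervalIntegrable f volume 0 T)
    (hf_nonneg : ∀ᵐ s ∂volume.restrict (Set.Icc 0 T), 0 ≤ f s) (a : ι) :
    ∫ s in (0 : ℝ)..T, f s * x a s ≤ ∫ s in (0 : ℝ)..T, f s := by
  refine intervalIntegral.integral_mono_ae_restrict hT (hx.intervalIntegrable_mul hT hf a) hf ?_
  filter_upwards [hf_nonneg, hx.ae_mem_Icc a] with s hfs hxs using
    mul_le_of_le_one_right hfs hxs.2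

lemma monotoneOn_baseUtility {a : ι} (hx : IsFeasibleAllocation T x) (hT : 0 ≤ T)
    (hv : IntervalIntegrable (v a) volume 0 T)
    (hv_nonneg : ∀ᵐ s ∂volume.restrict (Set.Icc 0 T), 0 ≤ v a s) :
    MonotoneOn (baseUtility c v x a) (Set.Icc 0 T) :=
  monotoneOn_const_add_intervalIntegral (hx.intervalIntegrable_mul hT hv a)
    (hx.ae_mul_nonneg hv_nonneg a)

lemma baseUtility_pos {a : ι} (hx : IsFeasibleAllocation T x) (hc : 0 < c a)
    (hv : IntervalIntegrable (v a) volume 0 T)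
    (hv_nonneg : ∀ᵐ s ∂volume.restrict (Set.Icc 0 T), 0 ≤ v a s) {t : ℝ}
    (ht : t ∈ Set.Icc 0 T) : 0 < baseUtility c v x a t :=
  hc.trans_le (le_const_add_intervalIntegral
    (hx.intervalIntegrable_mul (ht.1.trans ht.2) hv a) (hx.ae_mul_nonneg hv_nonneg a) ht)

lemma intervalIntegrable_mul_div_baseUtility {a : ι} (hx : IsFeasibleAllocation T x) (hT : 0 ≤ T)
    (hc : 0 < c a) (hv : IntervalIntegrable (v a) volume 0 T)
    (hv_nonneg : ∀ᵐ s ∂volume.restrict (Set.Icc 0 T), 0 ≤ v a s) :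
    IntervalIntegrable (fun s => v a s * x a s / baseUtility c v x a s) volume 0 T :=
  intervalIntegrable_div_const_add_intervalIntegral hT hc
    (hx.intervalIntegrable_mul hT hv a) (hx.ae_mul_nonneg hv_nonneg a)

lemma integral_mul_div_baseUtility_le {a : ι} (hx : IsFeasibleAllocation T x) (hT : 0 ≤ T)
    (hc : 0 < c a) (hv : IntervalIntegrable (v a) volume 0 T)
    (hv_nonneg : ∀ᵐ s ∂volume.restrict (Set.Icc 0 T), 0 ≤ v a s) :
    ∫ s in (0 : ℝ)..T, v a s * x a s / baseUtility c v x a s ≤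
      log (1 + (∫ s in (0 : ℝ)..T, v a s) / c a) := by
  have hlog := intervalIntegral_div_const_add_intervalIntegral_le hT hc
    (hx.intervalIntegrable_mul hT hv a) (hx.ae_mul_nonneg hv_nonneg a)
  refine hlog.trans (log_le_log ?_ ?_)
  · exact add_pos_of_pos_of_nonneg one_pos
      (div_nonneg (hx.integral_mul_nonneg hT hv_nonneg a) hc.le)
  · gcongr
    exact hx.integral_mul_le hT hv hv_nonneg a

end IsFeasibleAllocation

namespace IsNashianGreedy

lemma ae_sum_mul_div_le (hgreedy : IsNashianGreedy T c v x) (hc : ∀ a, 0 < c a)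
    (hv : ∀ a, IntervalIntegrable (v a) volume 0 T)
    (hv_nonneg : ∀ a, ∀ᵐ s ∂volume.restrict (Set.Icc 0 T), 0 ≤ v a s)
    (hx : IsFeasibleAllocation T x) (hy : IsFeasibleAllocation T y) :
    ∀ᵐ s ∂volume.restrict (Set.Icc 0 T),
      ∑ a, v a s * y a s / baseUtility c v x a s ≤
        ∑ a, v a s * x a s / baseUtility c v x a s := by
  filter_upwards [ae_all_iff.2 hv_nonneg, hx.ae_nonneg_and_sum_le_one,
    hy.ae_nonneg_and_sum_le_one, hgreedy, ae_restrict_mem measurableSet_Icc]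
    with s hvs hxs hys ⟨hsum, hmax⟩ hs
  have hU_pos := fun a => hx.baseUtility_pos (hc a) (hv a) (hv_nonneg a) hs
  simp only [← div_mul_eq_mul_div]
  exact sum_mul_le_sum_mul_of_forall_pos_le (fun a => div_nonneg (hvs a) (hU_pos a).le)
    hxs.1 hsum hys.1 hys.2
    fun a b hab => (div_le_div_iff₀ (hU_pos b) (hU_pos a)).2 (hmax a b hab)

lemma ae_sum_mul_div_terminal_le (hgreedy : IsNashianGreedy T c v x) (hc : ∀ a, 0 < c a)
    (hv : ∀ a, IntervalIntegrable (v a) volume 0 T)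
    (hv_nonneg : ∀ a, ∀ᵐ s ∂volume.restrict (Set.Icc 0 T), 0 ≤ v a s)
    (hx : IsFeasibleAllocation T x) (hy : IsFeasibleAllocation T y) :
    ∀ᵐ s ∂volume.restrict (Set.Icc 0 T),
      ∑ a, v a s * y a s / baseUtility c v x a T ≤
        ∑ a, v a s * x a s / baseUtility c v x a s := by
  filter_upwards [hgreedy.ae_sum_mul_div_le hc hv hv_nonneg hx hy,
    ae_all_iff.2 fun a => hy.ae_mul_nonneg (hv_nonneg a) a, ae_restrict_mem measurableSet_Icc]
    with s hle hvy hs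
  refine le_trans (Finset.sum_le_sum fun a _ => ?_) hle
  have hT : 0 ≤ T := hs.1.trans hs.2
  exact div_le_div_of_nonneg_left (hvy a) (hx.baseUtility_pos (hc a) (hv a) (hv_nonneg a) hs)
    (hx.monotoneOn_baseUtility hT (hv a) (hv_nonneg a) hs (Set.right_mem_Icc.2 hT) hs.2)

lemma sum_integral_mul_div_le (hgreedy : IsNashianGreedy T c v x) (hT : 0 ≤ T)
    (hc : ∀ a, 0 < c a) (hv : ∀ a, IntervalIntegrable (v a) volume 0 T)
    (hv_nonneg : ∀ a, ∀ᵐ s ∂volume.restrict (Set.Icc 0 T), 0 ≤ v a s)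
    (hx : IsFeasibleAllocation T x) (hy : IsFeasibleAllocation T y) :
    ∑ a, (∫ s in (0 : ℝ)..T, v a s * y a s) / baseUtility c v x a T ≤
      ∑ a, log (1 + (∫ s in (0 : ℝ)..T, v a s) / c a) := by
  have hy_int : ∀ a ∈ Finset.univ,
      IntervalIntegrable (fun s => v a s * y a s / baseUtility c v x a T) volume 0 T :=
    fun a _ => (hy.intervalIntegrable_mul hT (hv a) a).div_const _
  have hx_int : ∀ a ∈ Finset.univ,
      IntervalIntegrable (fun s => v a s * x a s / baseUtility c v x a s) volume 0 T :=
    fun a _ => hx.intervalIntegrable_mul_div_baseUtility hT (hc a) (hv a) (hv_nonneg a)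
  calc ∑ a, (∫ s in (0 : ℝ)..T, v a s * y a s) / baseUtility c v x a T
      = ∫ s in (0 : ℝ)..T, ∑ a, v a s * y a s / baseUtility c v x a T := by
        rw [intervalIntegral.integral_finsetSum hy_int]
        simp only [intervalIntegral.integral_div]
    _ ≤ ∫ s in (0 : ℝ)..T, ∑ a, v a s * x a s / baseUtility c v x a s :=
        intervalIntegral.integral_mono_ae_restrict hT
          (by simpa only [Finset.sum_fn] using IntervalIntegrable.sum _ hy_int)
          (by simpa only [Finset.sum_fn] using IntervalIntegrable.sum _ hx_int)
          (hgreedy.ae_sum_mul_div_terminal_le hc hv hv_nonneg hx hy)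
    _ = ∑ a, ∫ s in (0 : ℝ)..T, v a s * x a s / baseUtility c v x a s :=
        intervalIntegral.integral_finsetSum hx_int
    _ ≤ ∑ a, log (1 + (∫ s in (0 : ℝ)..T, v a s) / c a) :=
        Finset.sum_le_sum fun a _ =>
          hx.integral_mul_div_baseUtility_le hT (hc a) (hv a) (hv_nonneg a)

end IsNashianGreedy

end Allocation

theorem stmt_3_general {ι : Type*} [Fintype ι] [Nonempty ι] {T : ℝ} (hT : 0 ≤ T)
    {c : ι → ℝ} (hc : ∀ a, 0 < c a)
    {v : ι → ℝ → ℝ} (hv : ∀ a, IntervalIntegrable (v a) volume 0 T)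
    (hv_nonneg : ∀ a, ∀ᵐ s ∂volume.restrict (Set.Icc 0 T), 0 ≤ v a s)
    {x y : ι → ℝ → ℝ} (hx : IsFeasibleAllocation T x) (hgreedy : IsNashianGreedy T c v x)
    (hy : IsFeasibleAllocation T y) :
    (∏ a, ∫ s in (0 : ℝ)..T, v a s * y a s) ^ (1 / (Fintype.card ι : ℝ)) ≤
      (∑ a, log (1 + (∫ s in (0 : ℝ)..T, v a s) / c a)) / Fintype.card ι *
        (∏ a, baseUtility c v x a T) ^ (1 / (Fintype.card ι : ℝ)) := by
  have hU_pos : ∀ a, 0 < baseUtility c v x a T := fun a =>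
    hx.baseUtility_pos (hc a) (hv a) (hv_nonneg a) (Set.right_mem_Icc.2 hT)
  calc (∏ a, ∫ s in (0 : ℝ)..T, v a s * y a s) ^ (1 / (Fintype.card ι : ℝ))
      ≤ (∑ a, (∫ s in (0 : ℝ)..T, v a s * y a s) / baseUtility c v x a T) / Fintype.card ι *
          (∏ a, baseUtility c v x a T) ^ (1 / (Fintype.card ι : ℝ)) :=
        geom_mean_le_arith_mean_div_mul_geom_mean
          (fun a => hy.integral_mul_nonneg hT (hv_nonneg a) a) hU_pos
    _ ≤ (∑ a, log (1 + (∫ s in (0 : ℝ)..T, v a s) / c a)) / Fintype.card ι *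
          (∏ a, baseUtility c v x a T) ^ (1 / (Fintype.card ι : ℝ)) := by
        have hU_prod : 0 ≤ ∏ a, baseUtility c v x a T := Finset.prod_nonneg fun a _ => (hU_pos a).le
        grw [hgreedy.sum_integral_mul_div_le hT hc hv hv_nonneg hx hy]

theorem stmt_3
    (n : ℕ) (hn : 1 ≤ n) (T : ℝ) (hT : 0 < T)
    (v : Fin n → ℝ → ℝ)
    (hv_meas : ∀ a, Measurable (v a))
    (hv_nonneg : ∀ a, ∀ᵐ s ∂(volume.restrict (Set.Icc (0:ℝ) T)), 0 ≤ v a s)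
    (hv_int : ∀ a, IntegrableOn (v a) (Set.Icc (0:ℝ) T))
    (hv_unit : ∀ a, ∫ s in (0:ℝ)..T, v a s = 1)
    (x : Fin n → ℝ → ℝ)
    (hx_meas : ∀ a, Measurable (x a))
    (hx_feas : ∀ᵐ s ∂(volume.restrict (Set.Icc (0:ℝ) T)),
      (∀ a, 0 ≤ x a s) ∧ ∑ a, x a s ≤ 1)
    (U : Fin n → ℝ → ℝ)
    (hU : ∀ a t, U a t = 1 / (n : ℝ) + ∫ s in (0:ℝ)..t, v a s * x a s)
    (hgreedy : ∀ᵐ s ∂(volume.restrict (Set.Icc (0:ℝ) T)),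
      (∑ a, x a s = 1) ∧
      ∀ a b, 0 < x a s → v a s * U b s ≥ v b s * U a s)
    (xstar : Fin n → ℝ → ℝ)
    (hxstar_meas : ∀ a, Measurable (xstar a))
    (hxstar_feas : ∀ᵐ s ∂(volume.restrict (Set.Icc (0:ℝ) T)),
      (∀ a, 0 ≤ xstar a s) ∧ ∑ a, xstar a s ≤ 1)
    (Ustar : Fin n → ℝ)
    (hUstar : ∀ a, Ustar a = ∫ s in (0:ℝ)..T, v a s * xstar a s) :
    (∏ a, Ustar a) ^ (1 / (n : ℝ)) ≤
      Real.log ((n : ℝ) + 1) * (∏ a, U a T) ^ (1 / (n : ℝ)) := by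
  obtain rfl : Ustar = _ := funext hUstar
  obtain rfl : U = baseUtility (fun _ => 1 / (n : ℝ)) v x := funext₂ hU
  have hn_pos : (0 : ℝ) < n := Nat.cast_pos.2 hn
  have : Nonempty (Fin n) := Fin.pos_iff_nonempty.1 hn
  have hbound := stmt_3_general hT.le (fun _ => one_div_pos.2 hn_pos)
    (fun a => (intervalIntegrable_iff_integrableOn_Icc_of_le hT.le).2 (hv_int a)) hv_nonneg
    ⟨fun a => (hx_meas a).aestronglyMeasurable, hx_feas⟩ hgreedy
    ⟨fun a => (hxstar_meas a).aestronglyMeasurable, hxstar_feas⟩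
  have hlog_mean : (∑ a, log (1 + (∫ s in (0 : ℝ)..T, v a s) / (1 / (n : ℝ)))) / n =
      log (n + 1) := by
    simp [hv_unit, hn_pos.ne', add_comm]
  rwa [Fintype.card_fin, hlog_mean] at hbound
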